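/- F₁₂ is the weighted Fermat–Torricelli point of the triangle A₁', A₂', F₃₄ with weights 1, 1, 2·sin(θ/2): for every point P in the plane, dist(A₁',F₁₂) + dist(A₂',F₁₂) + 2·sin(θ/2)·dist(F₃₄,F₁₂) ≤ dist(A₁',P) + dist(A₂',P) + 2·sin(θ/2)·dist(F₃₄,P). Symmetrically, F₃₄ is the weighted Fermat–Torricelli point of the triangle A₄, A₃, F₁₂ with weights 1, 1, 2·sin(θ/2): for every point Q, dist(A₃,F₃₄) + dist(A₄,F₃₄) + 2·sin(θ/2)·dist(F₁₂,F₃₄) ≤ dist(A₃,Q) + dist(A₄,Q) + 2·sin(θ/2)·dist(F₁₂,Q). -/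

import Mathlib

open Real EuclideanGeometry

noncomputable def pt (x y : ℝ) : EuclideanSpace ℝ (Fin 2) :=
  (WithLp.equiv 2 (Fin 2 → ℝ)).symm ![x, y]

/-!
If functionals `f i` of norm at most one satisfy `f i (A i - F) = dist (A i) F` and
`∑ i, w i • f i = 0`, then `∑ i, w i * f i (A i - Q)` does not depend on `Q`: it equals the weighted
sum of distances at `F` and bounds it from below at every `Q`.

In an isosceles triangle, take `F` on the axis so that the lines from `F` to the base vertices make
the angle `φ` with the base. The unit vectors from `F` towards the base vertices then add up
to `-2 sin φ` times the unit vector towards the apex, which is where the weights `1, 1, 2 sin φ`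
come from. Both triangles of the trapezium have this shape; reversing the two axes exchanges their
roles.
-/

section FermatPoint

variable {ι V P : Type*} [Fintype ι]

/-- `F` is a weighted Fermat–Torricelli point of the family `A` with weights `w`: it minimises the
weighted sum of the distances to the points `A i`. Neither uniqueness of the minimiser nor
nonnegativity of the weights is part of the definition. -/
def IsWeightedFermatPoint [PseudoMetricSpace P] (w : ι → ℝ) (A : ι → P) (F : P) : Prop :=
  ∀ Q, ∑ i, w i * dist (A i) F ≤ ∑ i, w i * dist (A i) Q

theorem isWeightedFermatPoint_of_sum_smul_dual_eq_zero [SeminormedAddCommGroup V]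
    [NormedSpace ℝ V] [PseudoMetricSpace P] [NormedAddTorsor V P] {w : ι → ℝ} {A : ι → P} {F : P}
    {f : ι → StrongDual ℝ V} (hw : ∀ i, 0 ≤ w i) (hf : ∀ i, ‖f i‖ ≤ 1)
    (hbal : ∑ i, w i • f i = 0) (hdist : ∀ i, f i (A i -ᵥ F) = dist (A i) F) :
    IsWeightedFermatPoint w A F := by
  intro Q
  have hzero : ∑ i, w i * f i (Q -ᵥ F) = 0 := by
    simpa using DFunLike.congr_fun hbal (Q -ᵥ F)
  have hle (i : ι) : f i (A i -ᵥ Q) ≤ dist (A i) Q := by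
    rw [dist_eq_norm_vsub V]
    exact (le_abs_self _).trans ((f i).le_of_opNorm_le (hf i) _ |>.trans_eq (one_mul _))
  calc ∑ i, w i * dist (A i) F
      = ∑ i, (w i * f i (A i -ᵥ Q) + w i * f i (Q -ᵥ F)) := by
        simp only [← hdist, ← mul_add, ← map_add, vsub_add_vsub_cancel]
    _ = ∑ i, w i * f i (A i -ᵥ Q) := by rw [Finset.sum_add_distrib, hzero, add_zero]
    _ ≤ ∑ i, w i * dist (A i) Q :=
        Finset.sum_le_sum fun i _ ↦ mul_le_mul_of_nonneg_left (hle i) (hw i)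

theorem isWeightedFermatPoint_of_sum_smul_eq_zero [NormedAddCommGroup V]
    [InnerProductSpace ℝ V] [PseudoMetricSpace P] [NormedAddTorsor V P] {w : ι → ℝ} {A : ι → P}
    {F : P} {u : ι → V} (hw : ∀ i, 0 ≤ w i) (hu : ∀ i, ‖u i‖ = 1) (hbal : ∑ i, w i • u i = 0)
    (hray : ∀ i, SameRay ℝ (u i) (A i -ᵥ F)) : IsWeightedFermatPoint w A F := by
  refine isWeightedFermatPoint_of_sum_smul_dual_eq_zero (f := fun i ↦ innerSL ℝ (u i)) hw
    (fun i ↦ (innerSL_apply_norm ℝ (u i)).trans_le (hu i).le) ?_ fun i ↦ ?_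
  · simpa using congrArg (innerSL ℝ) hbal
  · rw [innerSL_apply_apply, inner_eq_norm_mul_iff_real.2 (hray i).norm_smul_eq.symm, hu i,
      one_mul, dist_eq_norm_vsub V]

end FermatPoint

section Isosceles

variable {V P : Type*} [NormedAddCommGroup V] [InnerProductSpace ℝ V]
  [PseudoMetricSpace P] [NormedAddTorsor V P] {e f : V}

theorem norm_cos_smul_add_sin_smul (he : ‖e‖ = 1) (hf : ‖f‖ = 1) (hef : inner ℝ e f = 0)
    (φ : ℝ) : ‖cos φ • e + sin φ • f‖ = 1 := by
  have horth : inner ℝ (cos φ • e) (sin φ • f) = 0 := by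
    rw [real_inner_smul_left, real_inner_smul_right, hef, mul_zero, mul_zero]
  rw [← sq_eq_sq₀ (norm_nonneg _) zero_le_one, sq,
    norm_add_sq_eq_norm_sq_add_norm_sq_real horth, norm_smul, norm_smul, he, hf]
  simp [← sq]

theorem isWeightedFermatPoint_isosceles (he : ‖e‖ = 1) (hf : ‖f‖ = 1) (hef : inner ℝ e f = 0)
    (M : P) {b h φ : ℝ} (hb : 0 ≤ b) (hφ : φ ∈ Set.Ico 0 (π / 2)) (hh : b * tan φ ≤ h) :
    IsWeightedFermatPoint ![1, 1, 2 * sin φ] ![b • e +ᵥ M, -(b • e) +ᵥ M, h • f +ᵥ M]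
      ((b * tan φ) • f +ᵥ M) := by
  have hcos : 0 < cos φ := cos_pos_of_mem_Ioo ⟨by linarith [hφ.1, pi_pos], hφ.2⟩
  have hsin : 0 ≤ sin φ := sin_nonneg_of_nonneg_of_le_pi hφ.1 (by linarith [hφ.2, pi_pos])
  refine isWeightedFermatPoint_of_sum_smul_eq_zero
    (u := ![cos φ • e - sin φ • f, -(cos φ • e + sin φ • f), f]) ?_ ?_ ?_ ?_
  · simpa [Fin.forall_fin_succ] using hsin
  · have hnorm_right : ‖cos φ • e - sin φ • f‖ = 1 := by
      simpa [sub_eq_add_neg] using norm_cos_smul_add_sin_smul he hf hef (-φ)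
    have hnorm_left : ‖-(cos φ • e + sin φ • f)‖ = 1 :=
      (norm_neg _).trans (norm_cos_smul_add_sin_smul he hf hef φ)
    simp [Fin.forall_fin_succ, hnorm_right, hnorm_left, hf, -neg_add_rev]
  · simp only [Fin.sum_univ_three, Matrix.cons_val]
    module
  · have hright : b • e - (b * tan φ) • f = (b / cos φ) • (cos φ • e - sin φ • f) := by
      rw [tan_eq_sin_div_cos]
      match_scalars <;> field_simp
    have hleft : -(b • e) - (b * tan φ) • f = (b / cos φ) • -(cos φ • e + sin φ • f) := by
      rw [tan_eq_sin_div_cos]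
      match_scalars <;> field_simp
    have hscale : 0 ≤ b / cos φ := by positivity
    simp only [Fin.forall_fin_succ, Matrix.cons_val_zero, Matrix.cons_val_succ,
      vadd_vsub_vadd_cancel_right, IsEmpty.forall_iff, and_true, hright, hleft, ← sub_smul]
    exact ⟨.sameRay_nonneg_smul_right _ hscale, .sameRay_nonneg_smul_right _ hscale,
      .sameRay_nonneg_smul_right _ (sub_nonneg.2 hh)⟩

/-- Geometrically, `hd` says that the point built on the base at height `d` is not below the one
built on the base at height `0`. -/
theorem stmt_7_general (he : ‖e‖ = 1) (hf : ‖f‖ = 1) (hef : inner ℝ e f = 0) (O : P)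
    {a12 a34 d φ : ℝ} (ha12 : 0 ≤ a12) (ha34 : 0 ≤ a34) (hφ : φ ∈ Set.Ico 0 (π / 2))
    (hd : (a12 + a34) / 2 * tan φ ≤ d) :
    IsWeightedFermatPoint ![1, 1, 2 * sin φ]
      ![(-(a12 / 2) • e + d • f) +ᵥ O, ((a12 / 2) • e + d • f) +ᵥ O,
        (a34 / 2 * tan φ) • f +ᵥ O]
      ((d - a12 / 2 * tan φ) • f +ᵥ O) ∧
    IsWeightedFermatPoint ![1, 1, 2 * sin φ]
      ![(a34 / 2) • e +ᵥ O, -(a34 / 2) • e +ᵥ O, (d - a12 / 2 * tan φ) • f +ᵥ O]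
      ((a34 / 2 * tan φ) • f +ᵥ O) := by
  constructor
  · have hflip (x : ℝ) : -(x • f) +ᵥ (d • f +ᵥ O) = (d - x) • f +ᵥ O := by
      rw [vadd_vadd, neg_add_eq_sub, ← sub_smul]
    have hupper := isWeightedFermatPoint_isosceles (e := -e) (f := -f) (by rwa [norm_neg])
      (by rwa [norm_neg]) (by rwa [inner_neg_neg]) (d • f +ᵥ O) (b := a12 / 2)
      (h := d - a34 / 2 * tan φ) (by positivity) hφ (by linarith)
    simpa only [smul_neg, neg_neg, hflip, sub_sub_cancel, vadd_vadd, neg_smul] using hupper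
  · simpa only [neg_smul] using isWeightedFermatPoint_isosceles he hf hef O
      (by positivity : 0 ≤ a34 / 2) hφ (by linarith)

end Isosceles

theorem half_mul_div_two_mul_le {s d : ℝ} (hs : 0 ≤ s) (hsd : s ≤ 2 * d) :
    s / 2 * (s / (2 * d)) ≤ d :=
  calc s / 2 * (s / (2 * d)) ≤ s / 2 :=
        mul_le_of_le_one_right (by positivity) (div_le_one_of_le₀ hsd (hs.trans hsd))
    _ ≤ d := by linarith

theorem pt_eq_smul_add_smul (x y : ℝ) : pt x y = x • pt 1 0 + y • pt 0 1 := by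
  ext i
  fin_cases i <;> simp [pt]

theorem stmt_7 (a12 a34 d θ : ℝ) (ha12 : 0 < a12) (ha34 : 0 < a34)
    (hd : max a12 a34 < d)
    (hθ : θ = 2 * Real.arctan ((a12 + a34) / (2 * d)))
    (A₁' A₂' A₃ A₄ F₁₂ F₃₄ : EuclideanSpace ℝ (Fin 2))
    (hA₁ : A₁' = pt (-(a12 / 2)) d) (hA₂ : A₂' = pt (a12 / 2) d)
    (hA₃ : A₃ = pt (a34 / 2) 0) (hA₄ : A₄ = pt (-(a34 / 2)) 0)
    (hF₁₂ : F₁₂ = pt 0 (d - a12 / 2 * Real.tan (θ / 2)))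
    (hF₃₄ : F₃₄ = pt 0 (a34 / 2 * Real.tan (θ / 2))) :
    (∀ P : EuclideanSpace ℝ (Fin 2),
      dist A₁' F₁₂ + dist A₂' F₁₂ + 2 * Real.sin (θ / 2) * dist F₃₄ F₁₂ ≤
      dist A₁' P + dist A₂' P + 2 * Real.sin (θ / 2) * dist F₃₄ P) ∧
    (∀ Q : EuclideanSpace ℝ (Fin 2),
      dist A₃ F₃₄ + dist A₄ F₃₄ + 2 * Real.sin (θ / 2) * dist F₁₂ F₃₄ ≤
      dist A₃ Q + dist A₄ Q + 2 * Real.sin (θ / 2) * dist F₁₂ Q) := by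
  obtain ⟨h12, h34⟩ := max_lt_iff.1 hd
  have hdpos : 0 < d := ha12.trans h12
  have hhalf : θ / 2 = arctan ((a12 + a34) / (2 * d)) := by rw [hθ]; ring
  have hφ : θ / 2 ∈ Set.Ico 0 (π / 2) :=
    hhalf ▸ ⟨arctan_nonneg.2 (by positivity), arctan_lt_pi_div_two _⟩
  have hgap : (a12 + a34) / 2 * tan (θ / 2) ≤ d := by
    rw [hhalf, tan_arctan]
    exact half_mul_div_two_mul_le (by positivity) (by linarith)
  have hfermat := stmt_7_general (e := pt 1 0) (f := pt 0 1)
    (by simp [pt, EuclideanSpace.norm_eq]) (by simp [pt, EuclideanSpace.norm_eq])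
    (by simp [pt, PiLp.inner_apply]) (0 : EuclideanSpace ℝ (Fin 2)) ha12.le ha34.le hφ hgap
  rw [pt_eq_smul_add_smul] at hA₁ hA₂ hA₃ hA₄ hF₁₂ hF₃₄
  subst hA₁ hA₂ hA₃ hA₄ hF₁₂ hF₃₄
  simpa [IsWeightedFermatPoint, Fin.sum_univ_three] using hfermat
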